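/- arXiv:1806.05828 — 2 statements merged into one kernel-verified Lean document; each statement's English description precedes it below -/
import Mathlib

section
/- Let X be a topological space and f : X → X a map that is continuous, closed (images of closed sets are closed) and surjective. Let Z ⊆ X be a closed subset that is the union of its finitely many irreducible components Z₁, …, Zₙ, and suppose f^{-s}(Z) = Z for some integer s ≥ 1. Then the map sending an irreducible component Zᵢ of Z to f^s(Zᵢ) is a well-defined permutation of the set {Z₁, …, Zₙ} of irreducible components of Z; in particular, f^{s·n!}(Zᵢ) = Zᵢ for every i. -/
/-- `T` is an irreducible component of the subset `Z` of a topological space: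
`T` is a maximal element among the irreducible subsets of `Z` (irreducibility of a subset is
intrinsic, so this agrees with the notion of irreducible component of `Z` with its subspace
topology). -/
def IsIrreducibleComponentOf {X : Type*} [TopologicalSpace X] (T Z : Set X) : Prop :=
  Maximal (fun t : Set X => t ⊆ Z ∧ IsIrreducible t) T

/-!
A closed continuous surjection from a space with finitely many irreducible components hits every
irreducible component `W` of its target: the images of the components of the source form a finite
closed cover, so the irreducible set `W` lies in one of them, and equals it by maximality. For a
self-map this makes `T ↦ g '' T` surjective on a finite set of components, hence a permutation.
The relative statement for `Z ⊆ X` is the absolute one for the restriction of `f^[s]` to `Z`.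
-/

section Iterate

open Set

variable {α : Type*} {A : Set α} {φ : α → α}

lemma iterate_factorial_ncard_eq_self (hA : A.Finite) (hmaps : MapsTo φ A A)
    (hinj : InjOn φ A) {a : α} (ha : a ∈ A) : φ^[A.ncard.factorial] a = a := by
  have : Fintype A := hA.fintype
  have hid : (hmaps.restrict φ A A)^[(Fintype.card A).factorial] = id :=
    Function.injective_iff_iterate_factorial_card_eq_id.1 (hmaps.restrict_inj.2 hinj)
  rw [← hmaps.coe_iterate_restrict ⟨a, ha⟩, ← Nat.card_coe_set_eq, Nat.card_eq_fintype_card, hid,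
    id]

lemma bijOn_of_finite_of_surjOn (hA : A.Finite) (hsurj : SurjOn φ A A) : BijOn φ A A := by
  have himage : A = φ '' A := eq_of_subset_of_ncard_le hsurj (ncard_image_le hA) (hA.image φ)
  exact (hA.surjOn_iff_bijOn_of_mapsTo (mapsTo_iff_image_subset.2 himage.ge)).1 hsurj

end Iterate

section Topology

open Set

variable {X Y : Type*} [TopologicalSpace X] [TopologicalSpace Y]

lemma isClosedMap_iterate {f : X → X} (hf : IsClosedMap f) (n : ℕ) : IsClosedMap f^[n] := by
  induction n with
  | zero => exact IsClosedMap.id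
  | succ n ih => exact ih.comp hf

lemma isClosedMap_mapsTo_restrict_of_preimage_eq {f : X → Y} (hf : IsClosedMap f) {Z : Set X}
    {W : Set Y} (hpre : f ⁻¹' W = Z) (hmaps : MapsTo f Z W) :
    IsClosedMap (hmaps.restrict f Z W) := by
  subst hpre
  exact hf.restrictPreimage W

lemma isIrreducible_image_iff_of_isEmbedding {f : X → Y} (hf : Topology.IsEmbedding f)
    {s : Set X} : IsIrreducible (f '' s) ↔ IsIrreducible s := by
  rw [isIrreducible_iff_irreducibleSpace, isIrreducible_iff_irreducibleSpace]
  exact (hf.homeomorphImage s).irreducibleSpace_iff.symm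

lemma setOf_isIrreducibleComponentOf_eq_image (Z : Set X) :
    {T | IsIrreducibleComponentOf T Z} = image ((↑) : Z → X) '' irreducibleComponents Z := by
  have hirr (t : Set X) :
      (t ⊆ Z ∧ IsIrreducible t) ↔ ∃ u : Set Z, IsIrreducible u ∧ (↑) '' u = t := by
    constructor
    · rintro ⟨htZ, ht⟩
      obtain ⟨u, rfl⟩ := subset_range_iff_exists_image_eq.1 (htZ.trans Subtype.range_val.ge)
      exact ⟨u, (isIrreducible_image_iff_of_isEmbedding .subtypeVal).1 ht, rfl⟩
    · rintro ⟨u, hu, rfl⟩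
      exact ⟨Subtype.coe_image_subset Z u,
        (isIrreducible_image_iff_of_isEmbedding .subtypeVal).2 hu⟩
  simp only [IsIrreducibleComponentOf, hirr]
  exact (image_monotone_setOfPred_maximal fun _ _ _ _ ↦
    image_subset_image_iff Subtype.val_injective).symm

theorem surjOn_image_irreducibleComponents {f : X → Y} (hcont : Continuous f)
    (hclosed : IsClosedMap f) (hsurj : Function.Surjective f)
    (hfin : (irreducibleComponents X).Finite) :
    SurjOn (image f) (irreducibleComponents X) (irreducibleComponents Y) := by
  intro W hW
  have himages_closed : ∀ V ∈ (hfin.image (image f)).toFinset, IsClosed V := by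
    simp only [Finite.mem_toFinset, forall_mem_image]
    exact fun T hT ↦ hclosed T (isClosed_of_mem_irreducibleComponents T hT)
  have himages_cover : W ⊆ ⋃₀ ↑(hfin.image (image f)).toFinset := by
    rw [Finite.coe_toFinset, ← image_sUnion, sUnion_irreducibleComponents, image_univ,
      hsurj.range_eq]
    exact subset_univ W
  obtain ⟨V, hV, hWV⟩ :=
    isIrreducible_iff_sUnion_isClosed.1 hW.prop _ himages_closed himages_cover
  obtain ⟨T, hT, rfl⟩ := (hfin.image (image f)).mem_toFinset.1 hV
  exact ⟨T, hT, (hW.eq_of_subset (hT.prop.image f hcont.continuousOn) hWV).symm⟩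

theorem bijOn_image_irreducibleComponents {g : X → X} (hcont : Continuous g)
    (hclosed : IsClosedMap g) (hsurj : Function.Surjective g)
    (hfin : (irreducibleComponents X).Finite) :
    BijOn (image g) (irreducibleComponents X) (irreducibleComponents X) :=
  bijOn_of_finite_of_surjOn hfin (surjOn_image_irreducibleComponents hcont hclosed hsurj hfin)

theorem image_permutes_irreducible_components_general {g : X → X} {Z : Set X}
    (hmaps : MapsTo g Z Z) (hcont : ContinuousOn g Z)
    (hclosed : IsClosedMap (hmaps.restrict g Z Z)) (hsurj : SurjOn g Z Z)
    (hfin : {T : Set X | IsIrreducibleComponentOf T Z}.Finite) :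
    BijOn (image g) {T | IsIrreducibleComponentOf T Z} {T | IsIrreducibleComponentOf T Z} ∧
    ∀ T, IsIrreducibleComponentOf T Z →
      g^[{T : Set X | IsIrreducibleComponentOf T Z}.ncard.factorial] '' T = T := by
  have hval : Function.Injective (image ((↑) : Z → X)) := Subtype.val_injective.image_injective
  have hsemiconj : Function.Semiconj (image ((↑) : Z → X)) (image (hmaps.restrict g Z Z))
      (image g) := Function.Semiconj.set_image fun _ ↦ rfl
  have hbij : BijOn (image g) {T | IsIrreducibleComponentOf T Z}
      {T | IsIrreducibleComponentOf T Z} := by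
    rw [setOf_isIrreducibleComponentOf_eq_image] at hfin ⊢
    exact hsemiconj.bijOn_image (bijOn_image_irreducibleComponents (hcont.mapsToRestrict hmaps)
      hclosed (hmaps.restrict_surjective_iff.2 hsurj) (hfin.of_finite_image hval.injOn)) hval.injOn
  refine ⟨hbij, fun T hT ↦ ?_⟩
  rw [image_iterate_eq]
  exact iterate_factorial_ncard_eq_self hfin hbij.mapsTo hbij.injOn hT

end Topology

/-- Let `X` be a topological space and `f : X → X` a continuous, closed and
surjective map.  Let `Z ⊆ X` be a closed subset which is the union of its finitely many
irreducible components, and suppose `f^{-s}(Z) = Z` for some integer `s ≥ 1`.  Then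
`T ↦ f^s(T)` is a well-defined permutation of the (finite) set of irreducible components of
`Z`; in particular `f^{s·n!}(T) = T` for every irreducible component `T` of `Z`, where `n` is
the number of irreducible components of `Z`. -/
theorem image_permutes_irreducible_components
    {X : Type*} [TopologicalSpace X] (f : X → X)
    (hcont : Continuous f) (hclosed : IsClosedMap f) (hsurj : Function.Surjective f)
    (Z : Set X) (hZ : IsClosed Z)
    (hfin : {T : Set X | IsIrreducibleComponentOf T Z}.Finite)
    (hunion : Z = ⋃₀ {T : Set X | IsIrreducibleComponentOf T Z})
    (s : ℕ) (hs : 1 ≤ s) (hper : f^[s] ⁻¹' Z = Z) :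
    (∀ T : Set X, IsIrreducibleComponentOf T Z →
        IsIrreducibleComponentOf (f^[s] '' T) Z) ∧
    Set.BijOn (fun T : Set X => f^[s] '' T)
      {T : Set X | IsIrreducibleComponentOf T Z}
      {T : Set X | IsIrreducibleComponentOf T Z} ∧
    (∀ T : Set X, IsIrreducibleComponentOf T Z →
        f^[s * Nat.factorial hfin.toFinset.card] '' T = T) := by
  obtain ⟨hbij, hfix⟩ := image_permutes_irreducible_components_general hper.ge
    (hcont.iterate s).continuousOn
    (isClosedMap_mapsTo_restrict_of_preimage_eq (isClosedMap_iterate hclosed s) hper hper.ge)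
    (by simpa only [hper] using (hsurj.iterate s).surjOn_preimage (t := Z)) hfin
  refine ⟨hbij.mapsTo, hbij, ?_⟩
  rwa [Function.iterate_mul, ← Set.ncard_eq_toFinset_card _ hfin]
end

section
/- Let f : X → Y be a finite surjective morphism of varieties over an algebraically closed field, with Y normal. Then f is an open map: the image under f of every Zariski-open subset of X is open in Y. -/
open AlgebraicGeometry CategoryTheory

/-!
Let `S` be a domain that is integral over a normal domain `R ⊆ S`, and let `a ∈ S`. By normality
`R[a] ≅ R[X] / (minpoly R a)` is finite free over `R`, so `Spec R[a] → Spec R` is open. As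
`Spec S → Spec R[a]` is surjective, the basic opens `D(a)` of `Spec S` and of `Spec R[a]` have the
same image in `Spec R`, which is therefore open.
-/

universe u

section PrimeSpectrum

open PrimeSpectrum TopologicalSpace

variable {R A S : Type*} [CommRing R] [CommRing A] [CommRing S] [Algebra R A] [Algebra R S]

theorem isOpenMap_comap_of_finite_of_projective [Module.Finite R A] [Module.Projective R A] :
    IsOpenMap (comap (algebraMap R A)) :=
  have : Module.FinitePresentation R A := Module.finitePresentation_of_projective R A
  isOpenMap_comap_of_hasGoingDown_of_finitePresentation

theorem image_comap_basicOpen_algebraMap [Algebra A S] [IsScalarTower R A S]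
    (hAS : Function.Surjective (comap (algebraMap A S))) (a : A) :
    comap (algebraMap R S) '' basicOpen (algebraMap A S a) =
      comap (algebraMap R A) '' basicOpen a := by
  rw [IsScalarTower.algebraMap_eq R A S, comap_comp, Set.image_comp, ← comap_basicOpen,
    Opens.coe_comap, ContinuousMap.coe_mk, Set.image_preimage_eq _ hAS]

variable [IsIntegrallyClosed R] [IsDomain S] [FaithfulSMul R S]

theorem isOpenMap_comap_adjoin_singleton {a : S} (ha : IsIntegral R a) :
    IsOpenMap (comap (algebraMap R (Algebra.adjoin R {a}))) :=
  have : IsDomain R := (FaithfulSMul.algebraMap_injective R S).isDomain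
  have basis := Algebra.adjoin.powerBasis' ha
  have : Module.Finite R (Algebra.adjoin R {a}) := basis.finite
  have : Module.Free R (Algebra.adjoin R {a}) := .of_basis basis.basis
  isOpenMap_comap_of_finite_of_projective

theorem isOpenMap_comap_of_isIntegral [Algebra.IsIntegral R S] :
    IsOpenMap (comap (algebraMap R S)) := by
  rw [isBasis_basic_opens.isOpenMap_iff]
  rintro _ ⟨_, ⟨a, rfl⟩, rfl⟩
  let A := Algebra.adjoin R {a}
  let a' : A := ⟨a, Algebra.self_mem_adjoin_singleton R a⟩
  have : Algebra.IsIntegral A S := .tower_top R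
  have image_eq : comap (algebraMap R S) '' basicOpen a = comap (algebraMap R A) '' basicOpen a' :=
    image_comap_basicOpen_algebraMap (Algebra.IsIntegral.comap_surjective A S) a'
  rw [image_eq]
  exact isOpenMap_comap_adjoin_singleton (Algebra.IsIntegral.isIntegral a) _ (basicOpen a').isOpen

end PrimeSpectrum

section Scheme

variable {X Y : Scheme.{u}}

theorem isIntegrallyClosed_section_of_stalk [IsIntegral X] {U : X.Opens} (hU : IsAffineOpen U)
    [Nonempty U] (hX : ∀ x : U, IsIntegrallyClosed (X.presheaf.stalk x.1)) :
    IsIntegrallyClosed Γ(X, U) := by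
  refine .of_localization_maximal fun p _ _ ↦ ?_
  let y : PrimeSpectrum Γ(X, U) := ⟨p, inferInstance⟩
  let x : U := ⟨hU.fromSpec y, (hU.isoSpec.inv y).2⟩
  let := X.presheaf.algebra_section_stalk x
  have : IsLocalization.AtPrime (X.presheaf.stalk x.1) p := hU.isLocalization_stalk' y x.2
  have := hX x
  let e : X.presheaf.stalk x.1 ≃ₐ[Γ(X, U)] Localization.AtPrime p :=
    IsLocalization.algEquiv p.primeCompl _ _
  exact .of_equiv e.toRingEquiv

theorem isOpenMap_comp_fromSpec {f : X ⟶ Y} {U : Y.Opens} (hU : IsAffineOpen U) [IsAffineHom f]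
    (h : IsOpenMap (PrimeSpectrum.comap (f.app U).hom)) :
    IsOpenMap ((hU.preimage f).fromSpec ≫ f) := by
  rw [← hU.SpecMap_appLE_fromSpec f (hU.preimage f) le_rfl, ← Scheme.Hom.app_eq_appLE,
    Scheme.Hom.comp_base]
  exact hU.fromSpec.isOpenEmbedding.isOpenMap.comp h

theorem isOpenMap_of_isOpenMap_comap_app {f : X ⟶ Y} [IsAffineHom f]
    (h : ∀ U : Y.Opens, IsAffineOpen U → Nonempty (f ⁻¹ᵁ U) →
      IsOpenMap (PrimeSpectrum.comap (f.app U).hom)) :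
    IsOpenMap f := by
  refine .of_nhds_le fun x ↦ ?_
  obtain ⟨U, hU, hxU, -⟩ := exists_isAffineOpen_mem_and_subset (U := ⊤) (x := f x) trivial
  let j := (hU.preimage f).fromSpec
  obtain ⟨z, rfl⟩ : x ∈ Set.range j := (hU.preimage f).range_fromSpec ▸ hxU
  have comp_open : IsOpenMap (f ∘ j) :=
    isOpenMap_comp_fromSpec hU (h U hU ⟨_, hxU⟩)
  calc nhds (f (j z)) ≤ Filter.map (f ∘ j) (nhds z) := comp_open.nhds_le z
    _ = Filter.map f (Filter.map j (nhds z)) := Filter.map_map.symm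
    _ ≤ Filter.map f (nhds (j z)) := Filter.map_mono j.continuous.continuousAt

theorem isOpenMap_comap_app [IsIntegral X] [IsIntegral Y] (f : X ⟶ Y) [IsIntegralHom f]
    [IsDominant f] {U : Y.Opens} (hU : IsAffineOpen U) [hfU : Nonempty (f ⁻¹ᵁ U)]
    (hY : ∀ y : U, IsIntegrallyClosed (Y.presheaf.stalk y.1)) :
    IsOpenMap (PrimeSpectrum.comap (f.app U).hom) := by
  have : Nonempty U := hfU.map fun x ↦ ⟨f x.1, x.2⟩
  have : IsIntegrallyClosed Γ(Y, U) := isIntegrallyClosed_section_of_stalk hU hY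
  have : IsSchemeTheoreticallyDominant f := .of_isDominant f
  algebraize [(f.app U).hom]
  have : Algebra.IsIntegral Γ(Y, U) Γ(X, f ⁻¹ᵁ U) := ⟨f.isIntegral_app U hU⟩
  have : FaithfulSMul Γ(Y, U) Γ(X, f ⁻¹ᵁ U) :=
    (faithfulSMul_iff_algebraMap_injective ..).mpr (f.app_injective U)
  exact isOpenMap_comap_of_isIntegral

theorem finite_surjective_onto_normal_is_open_general [IsIntegral X] [IsIntegral Y]
    (hY : ∀ y : Y, IsIntegrallyClosed (Y.presheaf.stalk y)) (f : X ⟶ Y) [IsIntegralHom f]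
    [IsDominant f] : IsOpenMap f :=
  isOpenMap_of_isOpenMap_comap_app fun _ hU _ ↦ isOpenMap_comap_app f hU fun y ↦ hY y

end Scheme

/-- Let `f : X → Y` be a finite surjective morphism of varieties over an
algebraically closed field `k` (a variety being an integral scheme, separated and of finite
type over `Spec k`), with `Y` normal (every stalk of the structure sheaf of `Y` is an
integrally closed domain; stalks of an integral scheme are automatically domains).  Then `f`
is an open map: the image under `f` of every Zariski-open subset of `X` is open in `Y`. -/
theorem finite_surjective_onto_normal_is_open
    {k : Type} [Field k] [IsAlgClosed k]
    (X Y : Scheme) [IsIntegral X] [IsIntegral Y]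
    (pX : X ⟶ Spec (CommRingCat.of k)) (pY : Y ⟶ Spec (CommRingCat.of k))
    [IsSeparated pX] [LocallyOfFiniteType pX] [QuasiCompact pX]
    [IsSeparated pY] [LocallyOfFiniteType pY] [QuasiCompact pY]
    (hYnormal : ∀ y : Y, IsIntegrallyClosed (Y.presheaf.stalk y))
    (f : X ⟶ Y) [IsFinite f] (hf : Function.Surjective f.base)
    (hfk : f ≫ pY = pX) :
    IsOpenMap f.base := by
  have : IsDominant f := ⟨hf.denseRange⟩
  exact finite_surjective_onto_normal_is_open_general hYnormal f
end
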